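/- Let φ : ℝ → ℝ be a C^∞ sigmoid (0 < φ < 1, φ′ > 0, φ(z) → 1 as z → +∞, φ(z) → 0 as z → −∞) satisfying the algebraic-decay assumption (A) with decay rate k, and fix α ∈ (0,1), α + β > 1. Then there exist real numbers η^L₀ < 0 < η^R₀ such that, writing μ₁* > 0 for the unique value with η^L₀ + μ₁*/α = η^R₀ + μ₁*/(α+β): (i) for every μ₁ ≥ 0 and every η₁ ∉ [η^L₀ + μ₁/α, η^R₀ + μ₁/(α+β)] there exist ε₀ > 0 and c > 0 such that for all ε ∈ (0, ε₀) the planar system ẋ = (α + β φ((x−1)/ε)) y − x, ẏ = η − (μ + α + β φ((x−1)/ε)) y with η = 1 + ε^{k/(k+1)} η₁ and μ = ε^{k/(k+1)} μ₁ has no nonconstant periodic solution whose image lies within Hausdorff distance c of the singular cycle Γ₀; (ii) for every μ₁ > μ₁* there exist ε₀ > 0, c > 0 and an open neighborhood I of 1 such that for all ε ∈ (0, ε₀) and all η ∈ I, the system with μ = ε^{k/(k+1)} μ₁ has no nonconstant periodic solution whose image lies within Hausdorff distance c of Γ₀. -/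

import Mathlib

open Filter Topology

/-- The substrate-depletion vector field
`(x, y) ↦ ((α + βφ((x−1)/ε))y − x, η − (μ + α + βφ((x−1)/ε))y)`. -/
noncomputable def sdVF (φ : ℝ → ℝ) (α β μ η ε : ℝ) (p : ℝ × ℝ) : ℝ × ℝ :=
  ((α + β * φ ((p.1 - 1) / ε)) * p.2 - p.1,
   η - (μ + α + β * φ ((p.1 - 1) / ε)) * p.2)

/-!
Put `δ = ε^{k/(k+1)}`. At distance `δ` from the switching line the sigmoid is evaluated at `±δ/ε`,
and `(δ/ε)^{-k} = δ`, so there the algebraic decay of `φ` costs only a term `Mδ`. To first order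
in `δ`, the quadrant `{x ≤ 1 - δ, y ≤ (1 + δs)/α}` is therefore forward invariant as soon as
`η₁ - μ₁/α < s < -(1 + βM/α)`. A periodic orbit near `Γ₀` follows its left branch into this quadrant
and can never return to the right branch, where `x > 1`, so `η^L₀ = -(1 + βM/α)` is admissible. For
large `η₁` the quadrant `{x ≥ 1 + δ, y ≥ (1 + δs)/(α + β)}` plays the same role with the two
branches exchanged.
-/

/-! ### Real functions and invariant quadrants -/

theorem eventually_nhdsGT_lt_of_hasDerivAt_lt {f g : ℝ → ℝ} {f' g' x : ℝ}
    (hf : HasDerivAt f f' x) (hg : HasDerivAt g g' x) (hfg : f x = g x) (h : f' < g') :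
    ∀ᶠ t in 𝓝[>] x, f t < g t := by
  have hslope : ∀ᶠ t in 𝓝[>] x, 0 < slope (g - f) x t :=
    ((hasDerivWithinAt_iff_tendsto_slope' Set.self_notMem_Ioi).1
      (hg.sub hf).hasDerivWithinAt).eventually_const_lt (sub_pos.2 h)
  filter_upwards [hslope, self_mem_nhdsWithin] with t ht hxt
  rw [slope_def_field, div_pos_iff_of_pos_right (sub_pos.2 hxt)] at ht
  simpa [hfg] using ht

theorem le_of_hasDerivAt_neg_of_eq {f f' : ℝ → ℝ} {c t₀ : ℝ}
    (hf : ∀ t, HasDerivAt f (f' t) t) (hneg : ∀ t, t₀ ≤ t → f t = c → f' t < 0)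
    (h₀ : f t₀ ≤ c) {t : ℝ} (ht : t₀ ≤ t) : f t ≤ c :=
  image_le_of_deriv_right_lt_deriv_boundary
    (fun s _ => (hf s).continuousAt.continuousWithinAt) (fun s _ => (hf s).hasDerivWithinAt)
    h₀ (fun s => hasDerivAt_const s c) (fun s hs => hneg s hs.1) ⟨ht, le_rfl⟩

section Quadrant

variable {V : ℝ × ℝ → ℝ × ℝ} {γ : ℝ → ℝ × ℝ} {P : ℝ × ℝ} {t₀ t : ℝ}

theorem solution_le_of_inward_on_boundary (hγ : ∀ t, HasDerivAt γ (V (γ t)) t)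
    (hfst : ∀ p, p.1 = P.1 → p.2 ≤ P.2 → (V p).1 < 0) (hsnd : ∀ p, p.2 = P.2 → (V p).2 < 0)
    (h₀ : γ t₀ ≤ P) (ht : t₀ ≤ t) : γ t ≤ P := by
  have hy : ∀ s, t₀ ≤ s → (γ s).2 ≤ P.2 := fun s hs =>
    le_of_hasDerivAt_neg_of_eq (fun u => (hγ u).snd) (fun u _ => hsnd (γ u)) h₀.2 hs
  exact ⟨le_of_hasDerivAt_neg_of_eq (fun u => (hγ u).fst)
    (fun u hu hx => hfst (γ u) hx (hy u hu)) h₀.1 ht, hy t ht⟩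

theorem le_solution_of_inward_on_boundary (hγ : ∀ t, HasDerivAt γ (V (γ t)) t)
    (hfst : ∀ p, p.1 = P.1 → P.2 ≤ p.2 → 0 < (V p).1) (hsnd : ∀ p, p.2 = P.2 → 0 < (V p).2)
    (h₀ : P ≤ γ t₀) (ht : t₀ ≤ t) : P ≤ γ t := by
  refine neg_le_neg_iff.1 (solution_le_of_inward_on_boundary (γ := fun t => -γ t)
    (V := fun p => -V (-p)) (fun s => by simpa only [neg_neg] using! (hγ s).neg) ?_ ?_
    (neg_le_neg h₀) ht)
  · intro p hx hy
    exact neg_lt_zero.2 (hfst (-p) (neg_eq_iff_eq_neg.2 hx) (le_neg.1 hy))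
  · intro p hy
    exact neg_lt_zero.2 (hsnd (-p) (neg_eq_iff_eq_neg.2 hy))

end Quadrant

/-! ### Periodic solutions -/

/-- A periodic solution of `ẋ = V(x)`, defined for all times. Equilibria are included. -/
structure IsPeriodicSolution {E : Type*} [NormedAddCommGroup E] [NormedSpace ℝ E]
    (V : E → E) (sol : ℝ → E) : Prop where
  hasDerivAt : ∀ t, HasDerivAt sol (V (sol t)) t
  periodic : ∃ T > 0, Function.Periodic sol T

namespace IsPeriodicSolution

section NormedSpace

variable {E : Type*} [NormedAddCommGroup E] [NormedSpace ℝ E] {V : E → E} {sol : ℝ → E}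

theorem continuous (h : IsPeriodicSolution V sol) : Continuous sol :=
  continuous_iff_continuousAt.2 fun t => (h.hasDerivAt t).continuousAt

theorem forall_of_forall_ge (h : IsPeriodicSolution V sol) {p : E → Prop} {t₀ : ℝ}
    (hp : ∀ t, t₀ ≤ t → p (sol t)) (t : ℝ) : p (sol t) := by
  obtain ⟨T, hT, hper⟩ := h.periodic
  obtain ⟨n, hn⟩ := exists_nat_gt ((t₀ - t) / T)
  rw [div_lt_iff₀ hT] at hn
  have hlate : p (sol (t + n * T)) := hp _ (by linarith)
  rwa [hper.nat_mul n t] at hlate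

theorem exists_dist_lt_of_hausdorffDist_lt (h : IsPeriodicSolution V sol) {Γ : Set E}
    (hΓ : Bornology.IsBounded Γ) {p : E} (hp : p ∈ Γ) {r : ℝ}
    (hr : Metric.hausdorffDist (Set.range sol) Γ < r) : ∃ t, dist (sol t) p < r := by
  obtain ⟨T, hT, hper⟩ := h.periodic
  obtain ⟨_, ⟨t, rfl⟩, ht⟩ := Metric.exists_dist_lt_of_hausdorffDist_lt' hp hr
    (Metric.hausdorffEDist_ne_top_of_nonempty_of_bounded (Set.range_nonempty sol) ⟨p, hp⟩
      (hper.isBounded_of_continuous hT.ne' h.continuous) hΓ)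
  exact ⟨t, ht⟩

end NormedSpace

section SubstrateDepletion

variable {φ : ℝ → ℝ} {α β μ η ε X Y t₀ : ℝ} {sol : ℝ → ℝ × ℝ}

theorem fst_le_of_upper_trapping_level (h : IsPeriodicSolution (sdVF φ α β μ η ε) sol)
    (hφ : ∀ z, 0 ≤ φ z) (hα : 0 < α) (hβ : 0 < β) (hY : 0 ≤ Y) (hη : η < (μ + α) * Y)
    (hX : (α + β * φ ((X - 1) / ε)) * Y < X) (h₀ : sol t₀ ≤ (X, Y)) (t : ℝ) :
    (sol t).1 ≤ X := by
  refine (h.forall_of_forall_ge (p := (· ≤ (X, Y))) (fun s hs =>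
    solution_le_of_inward_on_boundary h.hasDerivAt ?_ ?_ h₀ hs) t).1
  · rintro ⟨x, y⟩ (rfl : x = X) (hy : y ≤ Y)
    have hrate : 0 ≤ α + β * φ ((x - 1) / ε) := by have := hφ ((x - 1) / ε); positivity
    exact sub_neg.2 ((mul_le_mul_of_nonneg_left hy hrate).trans_lt hX)
  · rintro ⟨x, y⟩ (rfl : y = Y)
    have hsigmoid : 0 ≤ β * φ ((x - 1) / ε) * y := by have := hφ ((x - 1) / ε); positivity
    simp only [sdVF]
    linarith

theorem le_fst_of_lower_trapping_level (h : IsPeriodicSolution (sdVF φ α β μ η ε) sol)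
    (hφ₀ : ∀ z, 0 ≤ φ z) (hφ₁ : ∀ z, φ z ≤ 1) (hα : 0 < α) (hβ : 0 < β) (hY : 0 ≤ Y)
    (hη : (μ + (α + β)) * Y < η) (hX : X < (α + β * φ ((X - 1) / ε)) * Y)
    (h₀ : (X, Y) ≤ sol t₀) (t : ℝ) : X ≤ (sol t).1 := by
  refine (h.forall_of_forall_ge (p := ((X, Y) ≤ ·)) (fun s hs =>
    le_solution_of_inward_on_boundary h.hasDerivAt ?_ ?_ h₀ hs) t).1
  · rintro ⟨x, y⟩ (rfl : x = X) (hy : Y ≤ y)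
    have hrate : 0 ≤ α + β * φ ((x - 1) / ε) := by have := hφ₀ ((x - 1) / ε); positivity
    exact sub_pos.2 (hX.trans_le (mul_le_mul_of_nonneg_left hy hrate))
  · rintro ⟨x, y⟩ (rfl : y = Y)
    have hsigmoid : 0 ≤ β * (1 - φ ((x - 1) / ε)) * y := by
      have := sub_nonneg.2 (hφ₁ ((x - 1) / ε))
      positivity
    simp only [sdVF]
    linarith

end SubstrateDepletion

end IsPeriodicSolution

/-! ### The singular cycle -/

/-- `γ` runs along the branch of the singular cycle on which the activation rate
`α + β φ((x - 1)/ε)` has the constant limit `a`, starting from the point at which the branch with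
rate `b` ends. The paper's `γ^R` is the case `a = α + β`, `b = α`, and `γ^L` the opposite one. -/
structure IsSingularBranch (a b : ℝ) (γ : ℝ → ℝ × ℝ) : Prop where
  zero : γ 0 = (1, 1 / b)
  hasDerivAt : ∀ t, HasDerivAt γ (a * (γ t).2 - (γ t).1, 1 - a * (γ t).2) t
  tendsto : Tendsto γ atTop (𝓝 (1, 1 / a))

/-- The singular cycle `Γ₀` with branches `γ^R` and `γ^L`. -/
def singularCycle (α β : ℝ) (γR γL : ℝ → ℝ × ℝ) : Set (ℝ × ℝ) :=
  γR '' Set.Ici 0 ∪ γL '' Set.Ici 0 ∪ {(1, 1 / α), (1, 1 / (α + β))}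

theorem isBounded_image_Ici_of_tendsto {X : Type*} [PseudoMetricSpace X] {γ : ℝ → X} {p : X}
    (hγ : Continuous γ) (hlim : Tendsto γ atTop (𝓝 p)) (a : ℝ) :
    Bornology.IsBounded (γ '' Set.Ici a) := by
  obtain ⟨N, hN⟩ := (hlim.eventually (Metric.ball_mem_nhds p one_pos)).exists_forall_of_atTop
  have hbounded : Bornology.IsBounded (γ '' Set.Icc a N ∪ Metric.ball p 1) :=
    (isCompact_Icc.image hγ).isBounded.union Metric.isBounded_ball
  refine hbounded.subset ?_
  rintro _ ⟨t, ht, rfl⟩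
  rcases le_total t N with h | h
  · exact Or.inl ⟨t, ⟨ht, h⟩, rfl⟩
  · exact Or.inr (hN t h)

namespace IsSingularBranch

variable {a b : ℝ} {γ : ℝ → ℝ × ℝ}

theorem continuous (h : IsSingularBranch a b γ) : Continuous γ :=
  continuous_iff_continuousAt.2 fun t => (h.hasDerivAt t).continuousAt

theorem hasDerivAt_fst_zero (h : IsSingularBranch a b γ) :
    HasDerivAt (fun t => (γ t).1) (a / b - 1) 0 := by
  have hfst : HasDerivAt (fun t => (γ t).1) (a * (γ 0).2 - (γ 0).1) 0 := (h.hasDerivAt 0).fst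
  simpa only [h.zero, mul_one_div] using hfst

theorem exists_mem_lt (h : IsSingularBranch a b γ) (ha : 0 < a) (hab : a < b) :
    ∃ p ∈ γ '' Set.Ici 0, p.1 < 1 ∧ p.2 < 1 / a := by
  have hslope : a / b - 1 < 0 := sub_neg.2 ((div_lt_one (ha.trans hab)).2 hab)
  have hx : ∀ᶠ t in 𝓝[>] (0 : ℝ), (γ t).1 < 1 :=
    eventually_nhdsGT_lt_of_hasDerivAt_lt h.hasDerivAt_fst_zero (hasDerivAt_const 0 1)
      (by simp [h.zero]) hslope
  have hy : ∀ᶠ t in 𝓝[>] (0 : ℝ), (γ t).2 < 1 / a :=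
    (h.continuous.snd.tendsto' 0 _ (by simp [h.zero])).mono_left nhdsWithin_le_nhds
      |>.eventually_lt_const (one_div_lt_one_div_of_lt ha hab)
  obtain ⟨t, ⟨htx, hty⟩, ht⟩ := ((hx.and hy).and self_mem_nhdsWithin).exists
  exact ⟨γ t, ⟨t, Set.Ioi_subset_Ici_self ht, rfl⟩, htx, hty⟩

theorem exists_mem_gt (h : IsSingularBranch a b γ) (hb : 0 < b) (hba : b < a) :
    ∃ p ∈ γ '' Set.Ici 0, 1 < p.1 ∧ 1 / a < p.2 := by
  have hslope : 0 < a / b - 1 := sub_pos.2 ((one_lt_div hb).2 hba)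
  have hx : ∀ᶠ t in 𝓝[>] (0 : ℝ), 1 < (γ t).1 :=
    eventually_nhdsGT_lt_of_hasDerivAt_lt (hasDerivAt_const 0 1) h.hasDerivAt_fst_zero
      (by simp [h.zero]) hslope
  have hy : ∀ᶠ t in 𝓝[>] (0 : ℝ), 1 / a < (γ t).2 :=
    (h.continuous.snd.tendsto' 0 _ (by simp [h.zero])).mono_left nhdsWithin_le_nhds
      |>.eventually_const_lt (one_div_lt_one_div_of_lt hb hba)
  obtain ⟨t, ⟨htx, hty⟩, ht⟩ := ((hx.and hy).and self_mem_nhdsWithin).exists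
  exact ⟨γ t, ⟨t, Set.Ioi_subset_Ici_self ht, rfl⟩, htx, hty⟩

end IsSingularBranch

theorem isBounded_singularCycle {α β : ℝ} {γR γL : ℝ → ℝ × ℝ}
    (hR : IsSingularBranch (α + β) α γR) (hL : IsSingularBranch α (α + β) γL) :
    Bornology.IsBounded (singularCycle α β γR γL) :=
  ((isBounded_image_Ici_of_tendsto hR.continuous hR.tendsto 0).union
    (isBounded_image_Ici_of_tendsto hL.continuous hL.tendsto 0)).union (Set.toFinite _).isBounded

theorem eventually_ball_subset_Iic {p P : ℝ × ℝ} (h₁ : p.1 < P.1) (h₂ : p.2 < P.2) :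
    ∀ᶠ c in 𝓝[>] (0 : ℝ), Metric.ball p (2 * c) ⊆ Set.Iic (P - (c, c)) := by
  have hgap : 0 < min (P.1 - p.1) (P.2 - p.2) := lt_min (sub_pos.2 h₁) (sub_pos.2 h₂)
  filter_upwards [Ioo_mem_nhdsGT (div_pos hgap three_pos)] with c hc q hq
  obtain ⟨hc₁, hc₂⟩ := lt_min_iff.1 ((lt_div_iff₀ three_pos).1 hc.2)
  rw [Metric.mem_ball, Prod.dist_eq, max_lt_iff, Real.dist_eq, Real.dist_eq] at hq
  have hq₁ := (abs_lt.1 hq.1).2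
  have hq₂ := (abs_lt.1 hq.2).2
  constructor <;> simp only [Prod.fst_sub, Prod.snd_sub] <;> linarith

theorem eventually_ball_subset_Ici {p P : ℝ × ℝ} (h₁ : P.1 < p.1) (h₂ : P.2 < p.2) :
    ∀ᶠ c in 𝓝[>] (0 : ℝ), Metric.ball p (2 * c) ⊆ Set.Ici (P + (c, c)) := by
  filter_upwards [eventually_ball_subset_Iic (p := -p) (P := -P) (neg_lt_neg h₁) (neg_lt_neg h₂)]
    with c hc q hq
  have hneg : -q ≤ -P - (c, c) := hc (by simpa [Metric.mem_ball, dist_neg_neg] using hq)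
  rwa [← neg_add', neg_le_neg_iff] at hneg

theorem exists_pos_forall_periodic_meets_both_sides {α β : ℝ} {γR γL : ℝ → ℝ × ℝ}
    (hα : 0 < α) (hβ : 0 < β)
    (hR : IsSingularBranch (α + β) α γR) (hL : IsSingularBranch α (α + β) γL) :
    ∃ c > 0, ∀ V sol, IsPeriodicSolution V sol →
      Metric.hausdorffDist (Set.range sol) (singularCycle α β γR γL) ≤ c →
      (∃ t, sol t ≤ (1, 1 / α) - (c, c)) ∧ ∃ t, (1, 1 / (α + β)) + (c, c) ≤ sol t := by
  have hαβ : α < α + β := lt_add_of_pos_right α hβ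
  obtain ⟨pL, hpL, hL₁, hL₂⟩ := hL.exists_mem_lt hα hαβ
  obtain ⟨pR, hpR, hR₁, hR₂⟩ := hR.exists_mem_gt hα hαβ
  obtain ⟨c, ⟨hcL, hcR⟩, hc⟩ := (((eventually_ball_subset_Iic (P := (1, 1 / α)) hL₁ hL₂).and
    (eventually_ball_subset_Ici (P := (1, 1 / (α + β))) hR₁ hR₂)).and self_mem_nhdsWithin).exists
  replace hc : 0 < c := hc
  refine ⟨c, hc, fun V sol hsol hnear => ?_⟩
  have hvisit : ∀ p ∈ singularCycle α β γR γL, ∃ t, sol t ∈ Metric.ball p (2 * c) := fun p hp =>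
    hsol.exists_dist_lt_of_hausdorffDist_lt (isBounded_singularCycle hR hL) hp (by linarith)
  exact ⟨(hvisit pL (Or.inl (Or.inr hpL))).imp fun _ ht => hcL ht,
    (hvisit pR (Or.inl (Or.inl hpR))).imp fun _ ht => hcR ht⟩

/-! ### Algebraic decay at the switching scale -/

theorem isBigO_rpow_neg_of_eventuallyEq_inv_pow_mul {f ψ : ℝ → ℝ} {k : ℕ}
    (hf : f =ᶠ[atTop] fun z => (z ^ k)⁻¹ * ψ z⁻¹) (hψ : ContinuousAt ψ 0) :
    f =O[atTop] fun z => z ^ (-(k : ℝ)) := by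
  have hbounded : (fun z : ℝ => ψ z⁻¹) =O[atTop] fun _ => (1 : ℝ) :=
    (hψ.tendsto.comp tendsto_inv_atTop_zero).isBigO_one ℝ
  have hpow : (fun z : ℝ => (z ^ k)⁻¹) =ᶠ[atTop] fun z => z ^ (-(k : ℝ)) := by
    filter_upwards [eventually_ge_atTop 0] with z hz
    rw [Real.rpow_neg hz, Real.rpow_natCast]
  simpa using (hf.trans_isBigO ((hpow.isBigO).mul hbounded))

section SwitchingScale

variable {k : ℝ}

theorem tendsto_rpow_div_add_one_nhdsGT_zero (hk : 0 < k) :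
    Tendsto (fun ε : ℝ => ε ^ (k / (k + 1))) (𝓝[>] 0) (𝓝[>] 0) := by
  have hexp : 0 < k / (k + 1) := by positivity
  refine tendsto_nhdsWithin_iff.2 ⟨?_, ?_⟩
  · exact ((Real.continuous_rpow_const hexp.le).tendsto' 0 0
      (Real.zero_rpow hexp.ne')).mono_left nhdsWithin_le_nhds
  · filter_upwards [self_mem_nhdsWithin] with ε hε
    exact Real.rpow_pos_of_pos hε _

theorem rpow_div_add_one_div_self (hk : 0 < k) {ε : ℝ} (hε : 0 < ε) :
    ε ^ (k / (k + 1)) / ε = ε ^ (-(1 / (k + 1))) := by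
  rw [← Real.rpow_sub_one hε.ne']
  congr 1
  field_simp
  ring

theorem exists_eventually_abs_le_mul_rpow_of_isBigO {f : ℝ → ℝ} (hk : 0 < k)
    (hf : f =O[atTop] fun z => z ^ (-k)) :
    ∃ M > 0, ∀ᶠ ε in 𝓝[>] (0 : ℝ),
      |f (ε ^ (k / (k + 1)) / ε)| ≤ M * ε ^ (k / (k + 1)) := by
  have hlim : Tendsto (fun ε : ℝ => ε ^ (k / (k + 1)) / ε) (𝓝[>] 0) atTop := by
    refine (tendsto_rpow_neg_nhdsGT_zero (y := -(1 / (k + 1)))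
      (neg_lt_zero.2 (by positivity))).congr' ?_
    filter_upwards [self_mem_nhdsWithin] with ε hε
    exact (rpow_div_add_one_div_self hk hε).symm
  obtain ⟨M, hM, hbound⟩ := hf.exists_pos
  refine ⟨M, hM, ?_⟩
  filter_upwards [hlim.eventually hbound.bound, self_mem_nhdsWithin] with ε hε hpos
  have hscale : (ε ^ (k / (k + 1)) / ε) ^ (-k) = ε ^ (k / (k + 1)) := by
    rw [rpow_div_add_one_div_self hk hpos, ← Real.rpow_mul hpos.le]
    congr 1
    ring
  rwa [hscale, Real.norm_eq_abs, Real.norm_of_nonneg (Real.rpow_nonneg hpos.le _)] at hε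

end SwitchingScale

/-! ### Trapping levels -/

section TrappingLevel

variable {a m₁ m₂ η₁ r : ℝ}

theorem hasDerivAt_rate_mul_level (ha : a ≠ 0) (m s : ℝ) :
    HasDerivAt (fun δ : ℝ => (δ * m + a) * ((1 + δ * s) / a)) (m / a + s) 0 := by
  have hrate : HasDerivAt (fun δ : ℝ => δ * m + a) m 0 := by
    simpa using ((hasDerivAt_id (0 : ℝ)).mul_const m).add_const a
  have hlevel : HasDerivAt (fun δ : ℝ => (1 + δ * s) / a) (s / a) 0 := by
    simpa using (((hasDerivAt_id (0 : ℝ)).mul_const s).const_add 1).div_const a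
  refine (hrate.mul hlevel).congr_deriv ?_
  field_simp
  ring

theorem eventually_exists_upper_trapping_level (ha : 0 < a) (hr : 0 < r)
    (h : η₁ - m₁ / a < -1 - m₂ / a) :
    ∀ᶠ δ in 𝓝[>] (0 : ℝ), ∃ Y, 0 ≤ Y ∧ 1 / a - r ≤ Y ∧
      1 + δ * η₁ < (δ * m₁ + a) * Y ∧ (δ * m₂ + a) * Y < 1 - δ := by
  obtain ⟨s, hs₁, hs₂⟩ := exists_between h
  have hη : HasDerivAt (fun δ : ℝ => 1 + δ * η₁) η₁ 0 := by
    simpa using ((hasDerivAt_id (0 : ℝ)).mul_const η₁).const_add 1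
  have hx : HasDerivAt (fun δ : ℝ => 1 - δ) (-1) 0 := (hasDerivAt_id (0 : ℝ)).const_sub 1
  have hlevel : Tendsto (fun δ : ℝ => (1 + δ * s) / a) (𝓝[>] 0) (𝓝 (1 / a)) :=
    Continuous.tendsto' (by fun_prop) 0 _ (by simp) |>.mono_left nhdsWithin_le_nhds
  filter_upwards [hlevel.eventually_const_le (one_div_pos.2 ha),
    hlevel.eventually_const_le (sub_lt_self (1 / a) hr),
    eventually_nhdsGT_lt_of_hasDerivAt_lt hη (hasDerivAt_rate_mul_level ha.ne' m₁ s)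
      (by simp [ha.ne']) (by linarith),
    eventually_nhdsGT_lt_of_hasDerivAt_lt (hasDerivAt_rate_mul_level ha.ne' m₂ s) hx
      (by simp [ha.ne']) (by linarith)] with δ h₀ h₁ h₂ h₃
  exact ⟨_, h₀, h₁, h₂, h₃⟩

theorem eventually_exists_lower_trapping_level (ha : 0 < a) (hr : 0 < r)
    (h : 1 - m₂ / a < η₁ - m₁ / a) :
    ∀ᶠ δ in 𝓝[>] (0 : ℝ), ∃ Y, 0 ≤ Y ∧ Y ≤ 1 / a + r ∧
      (δ * m₁ + a) * Y < 1 + δ * η₁ ∧ 1 + δ < (δ * m₂ + a) * Y := by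
  obtain ⟨s, hs₁, hs₂⟩ := exists_between h
  have hη : HasDerivAt (fun δ : ℝ => 1 + δ * η₁) η₁ 0 := by
    simpa using ((hasDerivAt_id (0 : ℝ)).mul_const η₁).const_add 1
  have hx : HasDerivAt (fun δ : ℝ => 1 + δ) 1 0 := (hasDerivAt_id (0 : ℝ)).const_add 1
  have hlevel : Tendsto (fun δ : ℝ => (1 + δ * s) / a) (𝓝[>] 0) (𝓝 (1 / a)) :=
    Continuous.tendsto' (by fun_prop) 0 _ (by simp) |>.mono_left nhdsWithin_le_nhds
  filter_upwards [hlevel.eventually_const_le (one_div_pos.2 ha),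
    hlevel.eventually_le_const (lt_add_of_pos_right (1 / a) hr),
    eventually_nhdsGT_lt_of_hasDerivAt_lt (hasDerivAt_rate_mul_level ha.ne' m₁ s) hη
      (by simp [ha.ne']) (by linarith),
    eventually_nhdsGT_lt_of_hasDerivAt_lt hx (hasDerivAt_rate_mul_level ha.ne' m₂ s)
      (by simp [ha.ne']) (by linarith)] with δ h₀ h₁ h₂ h₃
  exact ⟨_, h₀, h₁, h₂, h₃⟩

end TrappingLevel

/-! ### Periodic solutions on one side of the switching line -/

section OneSided

variable {φ : ℝ → ℝ} {k α β M μ₁ η₁ r : ℝ}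

theorem eventually_forall_periodic_fst_lt_one (hk : 0 < k) (hφ₀ : ∀ z, 0 ≤ φ z)
    (hα : 0 < α) (hβ : 0 < β) (hr : 0 < r)
    (hM : ∀ᶠ ε in 𝓝[>] (0 : ℝ), φ (-(ε ^ (k / (k + 1)) / ε)) ≤ M * ε ^ (k / (k + 1)))
    (hη₁ : η₁ < -(1 + β * M / α) + μ₁ / α) :
    ∀ᶠ ε in 𝓝[>] (0 : ℝ), ∀ η ≤ 1 + ε ^ (k / (k + 1)) * η₁, ∀ sol,
      IsPeriodicSolution (sdVF φ α β (ε ^ (k / (k + 1)) * μ₁) η ε) sol →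
      (∃ t, sol t ≤ (1, 1 / α) - (r, r)) → ∀ t, (sol t).1 < 1 := by
  have hδ := tendsto_rpow_div_add_one_nhdsGT_zero hk
  filter_upwards [hM, hδ.eventually (Ioo_mem_nhdsGT hr), hδ.eventually
    (eventually_exists_upper_trapping_level (m₁ := μ₁) (m₂ := β * M) (η₁ := η₁) hα hr
      (by linarith))]
    with ε hφM ⟨hδ₀, hδr⟩ ⟨Y, hY₀, hYr, hYη, hYx⟩ η hη sol hsol ⟨t₀, ht₀⟩ t
  set δ := ε ^ (k / (k + 1))
  have hX : (α + β * φ ((1 - δ - 1) / ε)) * Y < 1 - δ := by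
    rw [show (1 - δ - 1) / ε = -(δ / ε) by ring]
    refine lt_of_le_of_lt (mul_le_mul_of_nonneg_right ?_ hY₀) hYx
    linarith [mul_le_mul_of_nonneg_left hφM hβ.le]
  have hentry : sol t₀ ≤ (1 - δ, Y) :=
    ht₀.trans ⟨sub_le_sub_left hδr.le 1, hYr⟩
  have hleft := hsol.fst_le_of_upper_trapping_level hφ₀ hα hβ hY₀ (hη.trans_lt hYη) hX hentry t
  linarith

theorem eventually_forall_periodic_one_lt_fst (hk : 0 < k) (hφ₀ : ∀ z, 0 ≤ φ z)
    (hφ₁ : ∀ z, φ z ≤ 1) (hα : 0 < α) (hβ : 0 < β) (hr : 0 < r)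
    (hM : ∀ᶠ ε in 𝓝[>] (0 : ℝ), 1 - φ (ε ^ (k / (k + 1)) / ε) ≤ M * ε ^ (k / (k + 1)))
    (hη₁ : 1 + β * M / (α + β) + μ₁ / (α + β) < η₁) :
    ∀ᶠ ε in 𝓝[>] (0 : ℝ), ∀ η ≥ 1 + ε ^ (k / (k + 1)) * η₁, ∀ sol,
      IsPeriodicSolution (sdVF φ α β (ε ^ (k / (k + 1)) * μ₁) η ε) sol →
      (∃ t, (1, 1 / (α + β)) + (r, r) ≤ sol t) → ∀ t, 1 < (sol t).1 := by
  have hδ := tendsto_rpow_div_add_one_nhdsGT_zero hk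
  filter_upwards [hM, hδ.eventually (Ioo_mem_nhdsGT hr), hδ.eventually
    (eventually_exists_lower_trapping_level (m₁ := μ₁) (m₂ := -(β * M)) (η₁ := η₁)
      (add_pos hα hβ) hr (by rw [neg_div]; linarith))]
    with ε hφM ⟨hδ₀, hδr⟩ ⟨Y, hY₀, hYr, hYη, hYx⟩ η hη sol hsol ⟨t₀, ht₀⟩ t
  set δ := ε ^ (k / (k + 1))
  have hX : 1 + δ < (α + β * φ ((1 + δ - 1) / ε)) * Y := by
    rw [show (1 + δ - 1) / ε = δ / ε by ring]
    refine lt_of_lt_of_le hYx (mul_le_mul_of_nonneg_right ?_ hY₀)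
    linarith [mul_le_mul_of_nonneg_left hφM hβ.le]
  have hentry : (1 + δ, Y) ≤ sol t₀ :=
    le_trans ⟨add_le_add_right hδr.le 1, hYr⟩ ht₀
  have hright := hsol.le_fst_of_lower_trapping_level hφ₀ hφ₁ hα hβ hY₀ (hYη.trans_le hη) hX hentry t
  linarith

end OneSided

/-! ### Nonexistence -/

theorem add_div_lt_add_div_of_crossing_lt {a b u v μs μ₁ : ℝ} (ha : 0 < a) (hab : a < b)
    (hcross : u + μs / a = v + μs / b) (hμ : μs < μ₁) : v + μ₁ / b < u + μ₁ / a := by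
  have hgap : (μ₁ - μs) / b < (μ₁ - μs) / a := div_lt_div_of_pos_left (sub_pos.2 hμ) ha hab
  rw [sub_div, sub_div] at hgap
  linarith

section Nonexistence

variable {φ : ℝ → ℝ} {k α β : ℝ} {γR γL : ℝ → ℝ × ℝ}

theorem exists_bounds_eventually_lt_hausdorffDist (hk : 0 < k) (hφ₀ : ∀ z, 0 ≤ φ z)
    (hφ₁ : ∀ z, φ z ≤ 1) (hleft : (fun z => φ (-z)) =O[atTop] fun z => z ^ (-k))
    (hright : (fun z => 1 - φ z) =O[atTop] fun z => z ^ (-k)) (hα : 0 < α) (hβ : 0 < β)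
    (hR : IsSingularBranch (α + β) α γR) (hL : IsSingularBranch α (α + β) γL) :
    ∃ ηL < 0, ∃ ηR > 0, ∃ c > 0, ∀ μ₁ η₁ : ℝ,
      (η₁ < ηL + μ₁ / α → ∀ᶠ ε in 𝓝[>] (0 : ℝ), ∀ η ≤ 1 + ε ^ (k / (k + 1)) * η₁,
        ∀ sol, IsPeriodicSolution (sdVF φ α β (ε ^ (k / (k + 1)) * μ₁) η ε) sol →
          c < Metric.hausdorffDist (Set.range sol) (singularCycle α β γR γL)) ∧
      (ηR + μ₁ / (α + β) < η₁ → ∀ᶠ ε in 𝓝[>] (0 : ℝ), ∀ η ≥ 1 + ε ^ (k / (k + 1)) * η₁,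
        ∀ sol, IsPeriodicSolution (sdVF φ α β (ε ^ (k / (k + 1)) * μ₁) η ε) sol →
          c < Metric.hausdorffDist (Set.range sol) (singularCycle α β γR γL)) := by
  obtain ⟨ML, hML, hboundL⟩ := exists_eventually_abs_le_mul_rpow_of_isBigO hk hleft
  obtain ⟨MR, hMR, hboundR⟩ := exists_eventually_abs_le_mul_rpow_of_isBigO hk hright
  obtain ⟨c, hc, hmeets⟩ := exists_pos_forall_periodic_meets_both_sides hα hβ hR hL
  refine ⟨-(1 + β * ML / α), neg_lt_zero.2 (by positivity), 1 + β * MR / (α + β), by positivity,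
    c, hc, fun μ₁ η₁ => ⟨fun hη₁ => ?_, fun hη₁ => ?_⟩⟩
  · filter_upwards [eventually_forall_periodic_fst_lt_one hk hφ₀ hα hβ hc
      (hboundL.mono fun _ => (le_abs_self _).trans) hη₁] with ε hε η hη sol hsol
    by_contra! hnear
    obtain ⟨hmeetsL, t, ht⟩ := hmeets _ sol hsol hnear
    have hlt : (sol t).1 < 1 := hε η hη sol hsol hmeetsL t
    have hge : 1 + c ≤ (sol t).1 := ht.1
    linarith
  · filter_upwards [eventually_forall_periodic_one_lt_fst hk hφ₀ hφ₁ hα hβ hc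
      (hboundR.mono fun _ => (le_abs_self _).trans) hη₁] with ε hε η hη sol hsol
    by_contra! hnear
    obtain ⟨⟨t, ht⟩, hmeetsR⟩ := hmeets _ sol hsol hnear
    have hgt : 1 < (sol t).1 := hε η hη sol hsol hmeetsR t
    have hle : (sol t).1 ≤ 1 - c := ht.1
    linarith

theorem nonexistence_of_relaxation_oscillations_general (hk : 0 < k) (hφ₀ : ∀ z, 0 ≤ φ z)
    (hφ₁ : ∀ z, φ z ≤ 1)
    (hleft : (fun z => φ (-z)) =O[atTop] fun z => z ^ (-k))
    (hright : (fun z => 1 - φ z) =O[atTop] fun z => z ^ (-k)) (hα : 0 < α) (hβ : 0 < β)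
    (hR : IsSingularBranch (α + β) α γR) (hL : IsSingularBranch α (α + β) γL) :
    ∃ ηL < 0, ∃ ηR > 0, ∃ c > 0,
      (∀ μ₁ η₁, η₁ ∉ Set.Icc (ηL + μ₁ / α) (ηR + μ₁ / (α + β)) →
        ∀ᶠ ε in 𝓝[>] (0 : ℝ), ∀ sol, IsPeriodicSolution
          (sdVF φ α β (ε ^ (k / (k + 1)) * μ₁) (1 + ε ^ (k / (k + 1)) * η₁) ε) sol →
          c < Metric.hausdorffDist (Set.range sol) (singularCycle α β γR γL)) ∧
      (∀ μs, ηL + μs / α = ηR + μs / (α + β) → ∀ μ₁, μs < μ₁ →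
        ∀ᶠ ε in 𝓝[>] (0 : ℝ), ∀ η sol, IsPeriodicSolution
          (sdVF φ α β (ε ^ (k / (k + 1)) * μ₁) η ε) sol →
          c < Metric.hausdorffDist (Set.range sol) (singularCycle α β γR γL)) := by
  obtain ⟨ηL, hηL, ηR, hηR, c, hc, hfar⟩ :=
    exists_bounds_eventually_lt_hausdorffDist hk hφ₀ hφ₁ hleft hright hα hβ hR hL
  refine ⟨ηL, hηL, ηR, hηR, c, hc, fun μ₁ η₁ hη₁ => ?_, fun μs hcross μ₁ hμ₁ => ?_⟩
  · rw [Set.mem_Icc, not_and_or, not_le, not_le] at hη₁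
    rcases hη₁ with hη₁ | hη₁
    · exact ((hfar μ₁ η₁).1 hη₁).mono fun ε hε => hε _ le_rfl
    · exact ((hfar μ₁ η₁).2 hη₁).mono fun ε hε => hε _ le_rfl
  · -- Past the crossing some `m` violates both bounds, so every `η` is on a bad side of `1 + δ m`.
    obtain ⟨m, hmR, hmL⟩ := exists_between
      (add_div_lt_add_div_of_crossing_lt hα (lt_add_of_pos_right α hβ) hcross hμ₁)
    filter_upwards [(hfar μ₁ m).1 hmL, (hfar μ₁ m).2 hmR] with ε hεL hεR η
    exact (le_total η _).elim (hεL η) (hεR η)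

end Nonexistence

/-- Nonexistence of relaxation oscillations (Theorem 1(b) nonexistence part and 1(c)):
there exist heteroclinic values `η^L₀ < 0 < η^R₀` such that (i) for `μ₁ ≥ 0` and
`η₁ ∉ [η^L₀ + μ₁/α, η^R₀ + μ₁/(α+β)]`, for all small `ε > 0` the system with
`η = 1 + ε^{k/(k+1)}η₁`, `μ = ε^{k/(k+1)}μ₁` has no nonconstant periodic solution near
the singular cycle `Γ₀`; and (ii) for `μ₁` above the crossing value `μ₁*` (the unique
`μ* > 0` with `η^L₀ + μ*/α = η^R₀ + μ*/(α+β)`), there is a neighborhood `I` of `η = 1`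
such that for all small `ε > 0` and all `η ∈ I` the system with `μ = ε^{k/(k+1)}μ₁` has
no nonconstant periodic solution near `Γ₀`. -/
theorem nonexistence_of_relaxation_oscillations
    (φ φL φR : ℝ → ℝ) (k : ℕ) (α β : ℝ)
    (hφ : ContDiff ℝ (⊤ : ℕ∞) φ)
    (hφ0 : ∀ z, 0 < φ z) (hφ1 : ∀ z, φ z < 1)
    (hφ' : ∀ z, 0 < deriv φ z)
    (hφtop : Tendsto φ atTop (nhds 1)) (hφbot : Tendsto φ atBot (nhds 0))
    (hk : 1 ≤ k)
    (hφL : ContDiff ℝ (⊤ : ℕ∞) φL) (hφR : ContDiff ℝ (⊤ : ℕ∞) φR)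
    (hφLnn : ∀ u : ℝ, 0 ≤ u → 0 ≤ φL u) (hφRnn : ∀ u : ℝ, 0 ≤ u → 0 ≤ φR u)
    (hφL0 : 0 < φL 0) (hφR0 : 0 < φR 0)
    (hAL : ∀ z : ℝ, z < 0 → φ z = ((-z) ^ k)⁻¹ * φL (-z)⁻¹)
    (hAR : ∀ z : ℝ, 0 < z → φ z = 1 - (z ^ k)⁻¹ * φR z⁻¹)
    (hα : 0 < α) (hα1 : α < 1) (hαβ : 1 < α + β)
    (γR γL : ℝ → ℝ × ℝ)
    (hγR0 : γR 0 = (1, 1 / α))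
    (hγR : ∀ t, HasDerivAt γR
      ((α + β) * (γR t).2 - (γR t).1, 1 - (α + β) * (γR t).2) t)
    (hγRlim : Tendsto γR atTop (nhds (1, 1 / (α + β))))
    (hγL0 : γL 0 = (1, 1 / (α + β)))
    (hγL : ∀ t, HasDerivAt γL
      (α * (γL t).2 - (γL t).1, 1 - α * (γL t).2) t)
    (hγLlim : Tendsto γL atTop (nhds (1, 1 / α))) :
    ∃ ηL0 : ℝ, ηL0 < 0 ∧ ∃ ηR0 : ℝ, 0 < ηR0 ∧
      ((∀ μ₁ : ℝ, 0 ≤ μ₁ → ∀ η₁ : ℝ,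
        η₁ ∉ Set.Icc (ηL0 + μ₁ / α) (ηR0 + μ₁ / (α + β)) →
        ∃ ε₀ > 0, ∃ c > 0, ∀ ε : ℝ, 0 < ε → ε < ε₀ →
          ¬ ∃ sol : ℝ → ℝ × ℝ,
            (∀ t, HasDerivAt sol
              (sdVF φ α β (ε ^ ((k : ℝ) / ((k : ℝ) + 1)) * μ₁)
                (1 + ε ^ ((k : ℝ) / ((k : ℝ) + 1)) * η₁) ε (sol t)) t) ∧
            (∃ T > 0, ∀ t, sol (t + T) = sol t) ∧
            (∃ t s : ℝ, sol t ≠ sol s) ∧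
            Metric.hausdorffDist (Set.range sol)
              (γR '' Set.Ici 0 ∪ γL '' Set.Ici 0 ∪ {(1, 1 / α), (1, 1 / (α + β))}) ≤ c) ∧
      (∀ μs : ℝ, 0 < μs → ηL0 + μs / α = ηR0 + μs / (α + β) →
        ∀ μ₁ : ℝ, μs < μ₁ →
        ∃ ε₀ > 0, ∃ c > 0, ∃ I : Set ℝ, IsOpen I ∧ (1 : ℝ) ∈ I ∧
          ∀ ε : ℝ, 0 < ε → ε < ε₀ → ∀ η ∈ I,
          ¬ ∃ sol : ℝ → ℝ × ℝ,
            (∀ t, HasDerivAt sol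
              (sdVF φ α β (ε ^ ((k : ℝ) / ((k : ℝ) + 1)) * μ₁) η ε (sol t)) t) ∧
            (∃ T > 0, ∀ t, sol (t + T) = sol t) ∧
            (∃ t s : ℝ, sol t ≠ sol s) ∧
            Metric.hausdorffDist (Set.range sol)
              (γR '' Set.Ici 0 ∪ γL '' Set.Ici 0 ∪ {(1, 1 / α), (1, 1 / (α + β))}) ≤ c)) := by
  obtain ⟨ηL, hηL, ηR, hηR, c, hc, houtside, hcrossing⟩ :=
    nonexistence_of_relaxation_oscillations_general (Nat.cast_pos.2 hk) (fun z => (hφ0 z).le)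
      (fun z => (hφ1 z).le)
      (isBigO_rpow_neg_of_eventuallyEq_inv_pow_mul
        ((eventually_gt_atTop 0).mono fun z hz => by simpa using hAL (-z) (neg_lt_zero.2 hz))
        hφL.continuous.continuousAt)
      (isBigO_rpow_neg_of_eventuallyEq_inv_pow_mul
        ((eventually_gt_atTop 0).mono fun z hz => by simp [hAR z hz])
        hφR.continuous.continuousAt)
      hα (by linarith) ⟨hγR0, hγR, hγRlim⟩ ⟨hγL0, hγL, hγLlim⟩
  refine ⟨ηL, hηL, ηR, hηR, fun μ₁ _ η₁ hη₁ => ?_, fun μs _ hμs μ₁ hμ₁ => ?_⟩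
  · obtain ⟨ε₀, hε₀, hfar⟩ :=
      (nhdsGT_basis (0 : ℝ)).eventually_iff.1 (houtside μ₁ η₁ hη₁)
    exact ⟨ε₀, hε₀, c, hc, fun ε h₀ h₁ ⟨sol, hsol, hper, _, hnear⟩ =>
      (hfar ⟨h₀, h₁⟩ sol ⟨hsol, hper⟩).not_ge hnear⟩
  · obtain ⟨ε₀, hε₀, hfar⟩ :=
      (nhdsGT_basis (0 : ℝ)).eventually_iff.1 (hcrossing μs hμs μ₁ hμ₁)
    exact ⟨ε₀, hε₀, c, hc, Set.univ, isOpen_univ, Set.mem_univ 1,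
      fun ε h₀ h₁ η _ ⟨sol, hsol, hper, _, hnear⟩ =>
        (hfar ⟨h₀, h₁⟩ η sol ⟨hsol, hper⟩).not_ge hnear⟩
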